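/- arXiv:1411.5663 — 2 statements merged into one kernel-verified Lean document; each statement's English description precedes it below -/
import Mathlib

section
/- (Lemma 2.1, second part.) Let φ ∈ Δ be a unit spinor. Then for every x ∈ ℝ^6 one has (x⌟ψ_φ)·φ = 2·x·φ, where x⌟ψ_φ is the bilinear form (y,z) ↦ ψ_φ(x,y,z); moreover the fundamental 2-form ω_φ satisfies ω_φ·φ = −3·j(φ) and ω_φ·j(φ) = 3φ. -/
open RealInnerProductSpace

noncomputable section

/-- The spin representation space Δ = ℝ^8. -/
abbrev Δ : Type := EuclideanSpace ℝ (Fin 8)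

/-- The standard skew endomorphism E_{ij} of ℝ^8: u_i ↦ u_j, u_j ↦ -u_i, others ↦ 0. -/
def E (i j : Fin 8) : Δ →ₗ[ℝ] Δ where
  toFun v := v i • EuclideanSpace.single j (1 : ℝ) - v j • EuclideanSpace.single i (1 : ℝ)
  map_add' x y := by
    simp only [PiLp.add_apply, add_smul]
    module
  map_smul' c x := by
    simp only [PiLp.smul_apply, smul_eq_mul, RingHom.id_apply, mul_smul]
    module

/-- The seven Clifford endomorphisms e_1, …, e_7 (indexed 0,…,6). -/
def cliff : Fin 7 → (Δ →ₗ[ℝ] Δ) :=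
  ![  E 0 7 + E 1 6 - E 2 5 - E 3 4,
    - E 0 6 + E 1 7 + E 2 4 - E 3 5,
    - E 0 5 + E 1 4 - E 2 7 + E 3 6,
    - E 0 4 - E 1 5 - E 2 6 - E 3 7,
    - E 0 2 - E 1 3 + E 4 6 + E 5 7,
      E 0 3 - E 1 2 - E 4 7 + E 5 6,
      E 0 1 - E 2 3 - E 4 5 + E 6 7]

/-- j = e_1 ∘ e_2 ∘ e_3 ∘ e_4 ∘ e_5 ∘ e_6. -/
def jmap : Δ →ₗ[ℝ] Δ :=
  cliff 0 ∘ₗ cliff 1 ∘ₗ cliff 2 ∘ₗ cliff 3 ∘ₗ cliff 4 ∘ₗ cliff 5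

/-- Clifford multiplication of a vector x ∈ ℝ^6 on a spinor. -/
def cm6 (x : EuclideanSpace ℝ (Fin 6)) (φ : Δ) : Δ :=
  ∑ i : Fin 6, x i • cliff i.castSucc φ

/-- Clifford multiplication of a vector x ∈ ℝ^7 on a spinor. -/
def cm7 (x : EuclideanSpace ℝ (Fin 7)) (φ : Δ) : Δ :=
  ∑ i : Fin 7, x i • cliff i φ


/-- Standard basis vector of ℝ^6. -/
def v6 (i : Fin 6) : EuclideanSpace ℝ (Fin 6) := EuclideanSpace.single i (1 : ℝ)

/-- The 3-form ψ_φ(x,y,z) = -⟨x·y·z·φ, φ⟩ on ℝ^6. -/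
def psiP (φ : Δ) (x y z : EuclideanSpace ℝ (Fin 6)) : ℝ :=
  -⟪cm6 x (cm6 y (cm6 z φ)), φ⟫

/-- The 3-form ψ_φ⁻(x,y,z) = -⟨x·y·z·φ, j(φ)⟩ on ℝ^6. -/
def psiM (φ : Δ) (x y z : EuclideanSpace ℝ (Fin 6)) : ℝ :=
  -⟪cm6 x (cm6 y (cm6 z φ)), jmap φ⟫

/-- Action of a trilinear form on ℝ^6 on a spinor:
τ·χ := Σ_{i<j<k} τ(v_i,v_j,v_k) e_i(e_j(e_k(χ))). -/
def tact6 (τ : EuclideanSpace ℝ (Fin 6) → EuclideanSpace ℝ (Fin 6) →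
    EuclideanSpace ℝ (Fin 6) → ℝ) (χ : Δ) : Δ :=
  ∑ i : Fin 6, ∑ j : Fin 6, ∑ k : Fin 6,
    if i < j ∧ j < k then
      τ (v6 i) (v6 j) (v6 k) • cliff i.castSucc (cliff j.castSucc (cliff k.castSucc χ))
    else 0

/-- Action of a bilinear form on ℝ^6 on a spinor:
σ·χ := Σ_{i<j} σ(v_i,v_j) e_i(e_j(χ)). -/
def bact6 (σ : EuclideanSpace ℝ (Fin 6) → EuclideanSpace ℝ (Fin 6) → ℝ) (χ : Δ) : Δ :=
  ∑ i : Fin 6, ∑ j : Fin 6,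
    if i < j then σ (v6 i) (v6 j) • cliff i.castSucc (cliff j.castSucc χ) else 0


lemma cliff_e0 (v : Δ) : cliff 0 v = !₂[-v 7, -v 6, v 5, v 4, -v 3, -v 2, v 1, v 0] := by
  ext n
  fin_cases n <;> simp [cliff, E]

lemma cliff_e1 (v : Δ) : cliff 1 v = !₂[v 6, -v 7, -v 4, v 5, v 2, -v 3, -v 0, v 1] := by
  ext n
  fin_cases n <;> simp [cliff, E]

lemma cliff_e2 (v : Δ) : cliff 2 v = !₂[v 5, -v 4, v 7, -v 6, v 1, -v 0, v 3, -v 2] := by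
  ext n
  fin_cases n <;> simp [cliff, E]

lemma cliff_e3 (v : Δ) : cliff 3 v = !₂[v 4, v 5, v 6, v 7, -v 0, -v 1, -v 2, -v 3] := by
  ext n
  fin_cases n <;> simp [cliff, E]

lemma cliff_e4 (v : Δ) : cliff 4 v = !₂[v 2, v 3, -v 0, -v 1, -v 6, -v 7, v 4, v 5] := by
  ext n
  fin_cases n <;> simp [cliff, E]

lemma cliff_e5 (v : Δ) : cliff 5 v = !₂[-v 3, v 2, -v 1, v 0, v 7, -v 6, v 5, -v 4] := by
  ext n
  fin_cases n <;> simp [cliff, E]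

lemma jmap_coord (v : Δ) : jmap v = !₂[v 1, -v 0, -v 3, v 2, -v 5, v 4, v 7, -v 6] := by
  simp only [jmap, LinearMap.comp_apply, cliff_e0, cliff_e1, cliff_e2, cliff_e3, cliff_e4, cliff_e5]
  ext n
  fin_cases n <;> simp

lemma cm6_expand (x : EuclideanSpace ℝ (Fin 6)) (v : Δ) : cm6 x v =
    x 0 • cliff 0 v + x 1 • cliff 1 v + x 2 • cliff 2 v + x 3 • cliff 3 v
      + x 4 • cliff 4 v + x 5 • cliff 5 v := by
  simp only [cm6, Fin.sum_univ_six]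
  rfl

lemma cm6_v6 (i : Fin 6) (v : Δ) : cm6 (v6 i) v = cliff i.castSucc v := by
  simp [cm6, v6]

/-- The expanded sum defining the action of a two-form. -/
lemma bact6_expand (s : EuclideanSpace ℝ (Fin 6) → EuclideanSpace ℝ (Fin 6) → ℝ) (v : Δ) :
    bact6 s v =
      s (v6 0) (v6 1) • cliff 0 (cliff 1 v)
      + s (v6 0) (v6 2) • cliff 0 (cliff 2 v)
      + s (v6 0) (v6 3) • cliff 0 (cliff 3 v)
      + s (v6 0) (v6 4) • cliff 0 (cliff 4 v)
      + s (v6 0) (v6 5) • cliff 0 (cliff 5 v)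
      + s (v6 1) (v6 2) • cliff 1 (cliff 2 v)
      + s (v6 1) (v6 3) • cliff 1 (cliff 3 v)
      + s (v6 1) (v6 4) • cliff 1 (cliff 4 v)
      + s (v6 1) (v6 5) • cliff 1 (cliff 5 v)
      + s (v6 2) (v6 3) • cliff 2 (cliff 3 v)
      + s (v6 2) (v6 4) • cliff 2 (cliff 4 v)
      + s (v6 2) (v6 5) • cliff 2 (cliff 5 v)
      + s (v6 3) (v6 4) • cliff 3 (cliff 4 v)
      + s (v6 3) (v6 5) • cliff 3 (cliff 5 v)
      + s (v6 4) (v6 5) • cliff 4 (cliff 5 v) := by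
  simp only [bact6, Fin.sum_univ_six]
  simp only [Fin.isValue, Fin.reduceLT, if_true, if_false, Fin.reduceCastSucc, zero_add, add_zero,
    lt_self_iff_false]
  abel

lemma inner_coord (v w : Δ) : ⟪v, w⟫ = v 0 * w 0 + v 1 * w 1 + v 2 * w 2 + v 3 * w 3
    + v 4 * w 4 + v 5 * w 5 + v 6 * w 6 + v 7 * w 7 := by
  simp [PiLp.inner_apply, Fin.sum_univ_eight, mul_comm]

set_option maxHeartbeats 4000000 in
/-- Contraction identity for a spinor of arbitrary length, in homogeneous form. -/
lemma psi_hom (φ : Δ) (x : EuclideanSpace ℝ (Fin 6)) :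
    bact6 (fun y z => psiP φ x y z) φ = (2 * ⟪φ, φ⟫) • cm6 x φ := by
  simp only [bact6_expand, psiP, cm6_v6, Fin.reduceCastSucc, Fin.isValue, cm6_expand x]
  simp only [cliff_e0, cliff_e1, cliff_e2, cliff_e3, cliff_e4, cliff_e5, inner_coord]
  ext n
  fin_cases n <;> simp <;> ring

lemma inner_cliff (φ : Δ) (i : Fin 6) (y : EuclideanSpace ℝ (Fin 6)) :
    ⟪cliff i.castSucc φ, cm6 y φ⟫ = y i * ⟪φ, φ⟫ := by
  rw [cm6_expand, inner_coord, inner_coord]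
  fin_cases i <;>
    simp [cliff_e0, cliff_e1, cliff_e2, cliff_e3, cliff_e4, cliff_e5] <;> ring

lemma omega_hom (φ : Δ) (χ : Δ) (hχ : χ = φ ∨ χ = jmap φ) :
    bact6 (fun x y => ⟪cm6 x φ, jmap (cm6 y φ)⟫) χ = (-3 * ⟪φ, φ⟫) • jmap χ := by
  simp only [bact6_expand, cm6_v6, Fin.reduceCastSucc, Fin.isValue]
  rcases hχ with rfl | rfl
  all_goals
    simp only [cliff_e0, cliff_e1, cliff_e2, cliff_e3, cliff_e4, cliff_e5, inner_coord, jmap_coord]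
    ext n
    fin_cases n <;> simp <;> ring

lemma jmap_jmap (φ : Δ) : jmap (jmap φ) = -φ := by
  simp only [jmap_coord]
  ext n
  fin_cases n <;> simp


/-- Lemma 2.1, second part: (x⌟ψ_φ)·φ = 2 x·φ for every x ∈ ℝ^6, and the
fundamental 2-form ω_φ(x,y) = ⟨x, J_φ y⟩ satisfies ω_φ·φ = -3 j(φ) and
ω_φ·j(φ) = 3φ. Here J_φ is the unique linear map with j(x·φ) = (J_φ x)·φ. -/
theorem contraction_psi_and_omega_action (φ : Δ) (hφ : ⟪φ, φ⟫ = 1)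
    (J : EuclideanSpace ℝ (Fin 6) →ₗ[ℝ] EuclideanSpace ℝ (Fin 6))
    (hJ : ∀ x : EuclideanSpace ℝ (Fin 6), jmap (cm6 x φ) = cm6 (J x) φ) :
    (∀ x : EuclideanSpace ℝ (Fin 6),
      bact6 (fun y z => psiP φ x y z) φ = (2 : ℝ) • cm6 x φ) ∧
    bact6 (fun x y => ⟪x, J y⟫) φ = (-3 : ℝ) • jmap φ ∧
    bact6 (fun x y => ⟪x, J y⟫) (jmap φ) = (3 : ℝ) • φ := by
  refine ⟨fun x => ?_, ?_⟩
  · rw [psi_hom, hφ, mul_one]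
  · have h : ∀ i j : Fin 6, ⟪v6 i, J (v6 j)⟫ = ⟪cm6 (v6 i) φ, jmap (cm6 (v6 j) φ)⟫ := by
      intro i j
      rw [hJ, cm6_v6, inner_cliff, hφ]
      simp [v6, EuclideanSpace.inner_single_left]
    have hb : ∀ χ, bact6 (fun x y => ⟪x, J y⟫) χ =
        bact6 (fun x y => ⟪cm6 x φ, jmap (cm6 y φ)⟫) χ := by
      intro χ
      simp only [bact6, h]
    constructor
    · rw [hb, omega_hom φ φ (Or.inl rfl), hφ, mul_one]
    · rw [hb, omega_hom φ _ (Or.inr rfl), hφ, mul_one, jmap_jmap]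
      simp

end
end

section
/- (Lemma 4.2(2): the Hodge dual 4-form of Φ.) Let φ ∈ Δ be a unit spinor. Then the quadrilinear map on ℝ^7 given by (v,w,x,y) ↦ Φ_φ(v,w,x×y) − ⟨v,x⟩⟨w,y⟩ + ⟨v,y⟩⟨w,x⟩ is an alternating 4-form. -/
open RealInnerProductSpace

noncomputable section

/-- Standard basis vector of ℝ^7. -/
def v7 (i : Fin 7) : EuclideanSpace ℝ (Fin 7) := EuclideanSpace.single i (1 : ℝ)

/-- The G₂ 3-form Φ_φ(x,y,z) = ⟨x·y·z·φ, φ⟩ on ℝ^7. -/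
def PhiP (φ : Δ) (x y z : EuclideanSpace ℝ (Fin 7)) : ℝ :=
  ⟪cm7 x (cm7 y (cm7 z φ)), φ⟫

/-- Action of a trilinear form on ℝ^7 on a spinor:
τ·χ := Σ_{i<j<k} τ(v_i,v_j,v_k) e_i(e_j(e_k(χ))). -/
def tact7 (τ : EuclideanSpace ℝ (Fin 7) → EuclideanSpace ℝ (Fin 7) →
    EuclideanSpace ℝ (Fin 7) → ℝ) (χ : Δ) : Δ :=
  ∑ i : Fin 7, ∑ j : Fin 7, ∑ k : Fin 7,
    if i < j ∧ j < k then
      τ (v7 i) (v7 j) (v7 k) • cliff i (cliff j (cliff k χ))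
    else 0

/-- Action of a bilinear form on ℝ^7 on a spinor:
σ·χ := Σ_{i<j} σ(v_i,v_j) e_i(e_j(χ)). -/
def bact7 (σ : EuclideanSpace ℝ (Fin 7) → EuclideanSpace ℝ (Fin 7) → ℝ) (χ : Δ) : Δ :=
  ∑ i : Fin 7, ∑ j : Fin 7,
    if i < j then σ (v7 i) (v7 j) • cliff i (cliff j χ) else 0

theorem cm7_coord (x : EuclideanSpace ℝ (Fin 7)) (p : Δ) :
    cm7 x p = !₂[
      -x 0 * p 7 + x 1 * p 6 + x 2 * p 5 + x 3 * p 4 + x 4 * p 2 - x 5 * p 3 - x 6 * p 1,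
      -x 0 * p 6 - x 1 * p 7 - x 2 * p 4 + x 3 * p 5 + x 4 * p 3 + x 5 * p 2 + x 6 * p 0,
      x 0 * p 5 - x 1 * p 4 + x 2 * p 7 + x 3 * p 6 - x 4 * p 0 - x 5 * p 1 + x 6 * p 3,
      x 0 * p 4 + x 1 * p 5 - x 2 * p 6 + x 3 * p 7 - x 4 * p 1 + x 5 * p 0 - x 6 * p 2,
      -x 0 * p 3 + x 1 * p 2 + x 2 * p 1 - x 3 * p 0 - x 4 * p 6 + x 5 * p 7 + x 6 * p 5,
      -x 0 * p 2 - x 1 * p 3 - x 2 * p 0 - x 3 * p 1 - x 4 * p 7 - x 5 * p 6 - x 6 * p 4,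
      x 0 * p 1 - x 1 * p 0 + x 2 * p 3 - x 3 * p 2 + x 4 * p 4 + x 5 * p 5 - x 6 * p 7,
      x 0 * p 0 + x 1 * p 1 - x 2 * p 2 - x 3 * p 3 + x 4 * p 5 - x 5 * p 4 + x 6 * p 6] := by
  ext k
  fin_cases k <;>
    simp [cm7, cliff, E, Fin.sum_univ_succ] <;> ring_nf

theorem inner8 (p q : Δ) : ⟪p, q⟫ = p 0 * q 0 + p 1 * q 1 + p 2 * q 2 + p 3 * q 3
    + p 4 * q 4 + p 5 * q 5 + p 6 * q 6 + p 7 * q 7 := by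
  simp [PiLp.inner_apply, Fin.sum_univ_eight, mul_comm]

theorem inner7 (p q : EuclideanSpace ℝ (Fin 7)) : ⟪p, q⟫ = p 0 * q 0 + p 1 * q 1 + p 2 * q 2
    + p 3 * q 3 + p 4 * q 4 + p 5 * q 5 + p 6 * q 6 := by
  simp [PiLp.inner_apply, Fin.sum_univ_seven, mul_comm]

theorem cm7_skew (x : EuclideanSpace ℝ (Fin 7)) (p q : Δ) :
    ⟪cm7 x p, q⟫ = -⟪p, cm7 x q⟫ := by
  rw [inner8, inner8, cm7_coord, cm7_coord]
  simp
  ring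

/-- Clifford multiplication is linear in the spinor. -/
theorem cm7_smul (x : EuclideanSpace ℝ (Fin 7)) (c : ℝ) (p : Δ) :
    cm7 x (c • p) = c • cm7 x p := by
  simp [cm7, Finset.smul_sum, smul_comm c]

/-- The Clifford relation. -/
theorem cm7_rel (x y : EuclideanSpace ℝ (Fin 7)) (p : Δ) :
    cm7 x (cm7 y p) = -cm7 y (cm7 x p) - (2 * ⟪x, y⟫) • p := by
  rw [inner7, cm7_coord, cm7_coord y, cm7_coord y, cm7_coord x]
  ext k
  fin_cases k <;> simp <;> ring

theorem cm7_inner_self (x : EuclideanSpace ℝ (Fin 7)) (p : Δ) : ⟪cm7 x p, p⟫ = 0 := by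
  have h := cm7_skew x p p
  rw [real_inner_comm] at h
  rw [real_inner_comm]
  linarith

theorem cm7_inner (x y : EuclideanSpace ℝ (Fin 7)) (p : Δ) :
    ⟪cm7 x p, cm7 y p⟫ = ⟪x, y⟫ * ⟪p, p⟫ := by
  have h1 := cm7_skew x p (cm7 y p)
  have h2 := cm7_skew y p (cm7 x p)
  have h3 := real_inner_comm (cm7 x p) (cm7 y p)
  rw [cm7_rel, inner_sub_right, inner_neg_right, real_inner_smul_right] at h1
  linarith

theorem PhiP_eq (p : Δ) (x y z : EuclideanSpace ℝ (Fin 7)) :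
    PhiP p x y z = ⟪cm7 y (cm7 x p), cm7 z p⟫ := by
  unfold PhiP
  rw [cm7_skew, cm7_skew, neg_neg, real_inner_comm]

/-- A vector orthogonal expansion: `φ, e₁φ, …, e₇φ` is an orthogonal basis. -/
theorem expand (z : EuclideanSpace ℝ (Fin 7)) (p q : Δ)
    (hz : ∀ i, z i = ⟪q, cm7 (v7 i) p⟫) :
    ⟪p, p⟫ • q = cm7 z p + ⟪q, p⟫ • p := by
  rw [cm7_coord, hz, hz, hz, hz, hz, hz, hz]
  simp only [cm7_coord, inner8]
  ext k
  fin_cases k <;> simp [v7] <;> ring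

theorem PhiP_swap12 (p : Δ) (x y z : EuclideanSpace ℝ (Fin 7)) :
    PhiP p x y z = -PhiP p y x z := by
  have h := cm7_inner_self z p
  rw [real_inner_comm] at h
  rw [PhiP_eq, PhiP_eq, cm7_rel, inner_sub_left, inner_neg_left, real_inner_smul_left, h]
  ring

/-- Lemma 4.2(2): the quadrilinear map
(v,w,x,y) ↦ Φ_φ(v,w,x×y) - ⟨v,x⟩⟨w,y⟩ + ⟨v,y⟩⟨w,x⟩
is an alternating 4-form, i.e. it vanishes whenever two arguments coincide. -/
theorem starPhi_alternating (φ : Δ) (hφ : ⟪φ, φ⟫ = 1)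
    (cross : EuclideanSpace ℝ (Fin 7) → EuclideanSpace ℝ (Fin 7) →
      EuclideanSpace ℝ (Fin 7))
    (hcross : ∀ x y z : EuclideanSpace ℝ (Fin 7), ⟪cross x y, z⟫ = PhiP φ x y z) :
    ∀ a b c : EuclideanSpace ℝ (Fin 7),
      (PhiP φ a a (cross b c) - ⟪a, b⟫ * ⟪a, c⟫ + ⟪a, c⟫ * ⟪a, b⟫ = 0) ∧
      (PhiP φ a b (cross a c) - ⟪a, a⟫ * ⟪b, c⟫ + ⟪a, c⟫ * ⟪b, a⟫ = 0) ∧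
      (PhiP φ a b (cross c a) - ⟪a, c⟫ * ⟪b, a⟫ + ⟪a, a⟫ * ⟪b, c⟫ = 0) ∧
      (PhiP φ b a (cross a c) - ⟪b, a⟫ * ⟪a, c⟫ + ⟪b, c⟫ * ⟪a, a⟫ = 0) ∧
      (PhiP φ b a (cross c a) - ⟪b, c⟫ * ⟪a, a⟫ + ⟪b, a⟫ * ⟪a, c⟫ = 0) ∧
      (PhiP φ b c (cross a a) - ⟪b, a⟫ * ⟪c, a⟫ + ⟪b, a⟫ * ⟪c, a⟫ = 0) := by
  have hc : ∀ x y, cm7 (cross x y) φ = cm7 y (cm7 x φ) + ⟪x, y⟫ • φ := by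
    intro x y
    have h := expand (cross x y) φ (cm7 y (cm7 x φ)) (by
      intro i
      rw [← PhiP_eq, ← hcross]
      simp [v7, EuclideanSpace.inner_single_right])
    rw [cm7_skew, cm7_inner, hφ] at h
    rw [one_smul] at h
    rw [h]
    module
  have key : ∀ x y z w, PhiP φ x y (cross z w) = ⟪cross x y, cross z w⟫ :=
    fun x y z w => (hcross x y _).symm
  have hsw : ∀ x y, cross x y = -cross y x := by
    intro x y
    refine ext_inner_right ℝ fun z => ?_
    rw [inner_neg_left, hcross, hcross, PhiP_swap12]
  have hself : ∀ x, cross x x = 0 := by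
    intro x
    have h := hsw x x
    ext i
    have h2 := congrArg (fun v : EuclideanSpace ℝ (Fin 7) => v i) h
    simp only [PiLp.neg_apply] at h2
    simp only [PiLp.zero_apply]
    linarith
  have hmain : ∀ x y z, ⟪cross x y, cross x z⟫ = ⟪x, x⟫ * ⟪y, z⟫ - ⟪x, y⟫ * ⟪x, z⟫ := by
    intro x y z
    have h := cm7_inner (cross x y) (cross x z) φ
    rw [hφ, mul_one, hc, hc] at h
    rw [← h]
    simp only [inner_add_left, inner_add_right, real_inner_smul_left, real_inner_smul_right]
    rw [cm7_inner, cm7_inner, cm7_skew y, cm7_inner, real_inner_comm (cm7 z (cm7 x φ)) φ, cm7_skew z, cm7_inner,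
      hφ]
    ring
  intro a b c
  have hab := real_inner_comm a b
  have hm := hmain a b c
  simp only [key]
  rw [hself, hsw c a, hsw b a]
  simp only [inner_neg_left, inner_neg_right, inner_zero_left, inner_zero_right, hm]
  have hca := real_inner_comm a c
  refine ⟨?_, ?_, ?_, ?_, ?_, ?_⟩ <;> (try simp only [hab, hca]) <;> ring

end
end
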